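/- Let G be a finite simple graph and T a set of vertices of G. Suppose J is an edge set of G of minimum cardinality among all edge sets whose set of odd-degree vertices equals T. Then the spanning subgraph (V, J) is acyclic, i.e., contains no cycle. -/

import Mathlib

/-- The set of vertices having odd degree in the spanning subgraph with edge set
`J` (a vertex has odd degree iff it is incident to an odd number of edges of `J`). -/
def oddVertexSet {V : Type*} (J : Set (Sym2 V)) : Set V :=
  {v | Odd ({e ∈ J | v ∈ e}).ncard}

/-!
The odd-vertex set turns symmetric differences of edge sets into symmetric differences of vertex
sets, and the edge set of a closed trail has no odd vertex. So deleting the edges of a cycle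
contained in `J` leaves a strictly smaller edge set with the same odd vertices.
-/

open scoped symmDiff

theorem odd_ncard_symmDiff {α : Type*} {s t : Set α} (hs : s.Finite) (ht : t.Finite) :
    Odd (s ∆ t).ncard ↔ Xor (Odd s.ncard) (Odd t.ncard) := by
  have ncard_symmDiff : (s ∆ t).ncard = (s \ t).ncard + (t \ s).ncard :=
    Set.ncard_union_eq disjoint_sdiff_sdiff hs.sdiff ht.sdiff
  have ncard_left := Set.ncard_inter_add_ncard_sdiff_eq_ncard s t hs
  have ncard_right := Set.ncard_inter_add_ncard_sdiff_eq_ncard t s ht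
  rw [Set.inter_comm] at ncard_right
  grind

section OddVertexSet

variable {V : Type*} {A B : Set (Sym2 V)}

theorem mem_oddVertexSet {v : V} : v ∈ oddVertexSet A ↔ Odd {e ∈ A | v ∈ e}.ncard := Iff.rfl

theorem oddVertexSet_symmDiff (hA : ∀ v, {e ∈ A | v ∈ e}.Finite)
    (hB : ∀ v, {e ∈ B | v ∈ e}.Finite) :
    oddVertexSet (A ∆ B) = oddVertexSet A ∆ oddVertexSet B := by
  ext v
  have star_symmDiff : {e ∈ A ∆ B | v ∈ e} = {e ∈ A | v ∈ e} ∆ {e ∈ B | v ∈ e} :=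
    Set.inter_symmDiff_distrib_right A B {e | v ∈ e}
  rw [mem_oddVertexSet, star_symmDiff, odd_ncard_symmDiff (hA v) (hB v), Set.mem_symmDiff,
    mem_oddVertexSet, mem_oddVertexSet, xor_def]

theorem oddVertexSet_sdiff_of_subset (hA : ∀ v, {e ∈ A | v ∈ e}.Finite) (hBA : B ⊆ A)
    (hB : oddVertexSet B = ∅) : oddVertexSet (A \ B) = oddVertexSet A := by
  have hB_fin (v : V) : {e ∈ B | v ∈ e}.Finite := (hA v).subset fun _ he ↦ ⟨hBA he.1, he.2⟩
  calc
    oddVertexSet (A \ B) = oddVertexSet (A ∆ B) := by rw [symmDiff_of_ge hBA]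
    _ = oddVertexSet A ∆ oddVertexSet B := oddVertexSet_symmDiff hA hB_fin
    _ = oddVertexSet A := by rw [hB, ← Set.bot_eq_empty, symmDiff_bot]

variable {G : SimpleGraph V} {u v : V}

theorem ncard_sep_edgeSet_eq_countP [DecidableEq V] {p : G.Walk u v} (hp : p.IsTrail) (w : V) :
    {e ∈ p.edgeSet | w ∈ e}.ncard = p.edges.countP (w ∈ ·) := by
  have star_eq : {e ∈ p.edgeSet | w ∈ e} = (p.edges.filter (w ∈ ·)).toFinset := by
    ext e
    simp
  rw [star_eq, Set.ncard_coe_finset, List.toFinset_card_of_nodup (hp.edges_nodup.filter _),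
    List.countP_eq_length_filter]

theorem oddVertexSet_edgeSet_of_isTrail {p : G.Walk u v} (hp : p.IsTrail) :
    oddVertexSet p.edgeSet = {u} ∆ {v} := by
  classical
  ext w
  rw [mem_oddVertexSet, ncard_sep_edgeSet_eq_countP hp, ← Nat.not_even_iff_odd,
    hp.even_countP_edges_iff, Set.mem_symmDiff, Set.mem_singleton_iff, Set.mem_singleton_iff]
  grind

end OddVertexSet

theorem minimum_oddVertexSet_acyclic_general {V : Type*} (G : SimpleGraph V) (T : Set V)
    (J : Set (Sym2 V)) (hfin : ∀ v, {e ∈ J | v ∈ e}.Finite)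
    (hmin : Minimal (oddVertexSet · = T) J) :
    ¬ ∃ (x : V) (c : G.Walk x x), c.IsCycle ∧ ∀ e ∈ c.edges, e ∈ J := by
  rintro ⟨x, c, hc, hcJ⟩
  have odd_cycle : oddVertexSet c.edgeSet = ∅ := by
    rw [oddVertexSet_edgeSet_of_isTrail hc.isTrail, symmDiff_self, Set.bot_eq_empty]
  have odd_sdiff : oddVertexSet (J \ c.edgeSet) = T :=
    (oddVertexSet_sdiff_of_subset hfin hcJ odd_cycle).trans hmin.prop
  have disjoint_cycle : Disjoint J c.edgeSet :=
    Set.subset_sdiff.mp (hmin.le_of_le odd_sdiff Set.sdiff_subset) |>.2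
  obtain ⟨e, he⟩ := List.exists_mem_of_ne_nil c.edges (by simpa using hc.not_nil)
  exact Set.disjoint_left.mp disjoint_cycle (hcJ e he) he

/-- If `J` is an edge set of minimum cardinality among all edge sets whose set of
odd-degree vertices equals `T`, then the spanning subgraph `(V, J)` is acyclic. -/
theorem minimum_oddVertexSet_acyclic {V : Type*} [Fintype V] (G : SimpleGraph V)
    (T : Set V) (J : Set (Sym2 V)) (hJ : J ⊆ G.edgeSet)
    (hT : oddVertexSet J = T)
    (hmin : ∀ J' : Set (Sym2 V), J' ⊆ G.edgeSet → oddVertexSet J' = T →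
      J.ncard ≤ J'.ncard) :
    ¬ ∃ (x : V) (c : G.Walk x x), c.IsCycle ∧ ∀ e ∈ c.edges, e ∈ J :=
  minimum_oddVertexSet_acyclic_general G T J (fun _ ↦ Set.toFinite _) ⟨hT, fun J' hJ' hle ↦
    (Set.eq_of_subset_of_ncard_le hle (hmin J' (hle.trans hJ) hJ')).ge⟩
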